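/- arXiv:1511.07846 — 6 statements merged into one kernel-verified Lean document; each statement's English description precedes it below -/
import Mathlib

section
/- For every multiset X : Multiset (κ × α), unnesting its group-by recovers X, i.e. (groupBy X).bind (fun p => p.2.map (fun v => (p.1, v))) = X. -/
/-- Group a bag of key-value pairs by key: one pair `(k, s)` for each distinct
key `k`, where `s` is the bag of values associated with `k`. -/
def groupBy {κ α : Type*} [DecidableEq κ] (X : Multiset (κ × α)) :
    Multiset (κ × Multiset α) :=
  ((X.map Prod.fst).dedup).map
    (fun k => (k, (X.filter (fun p => p.1 = k)).map Prod.snd))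

section Fibers

variable {ι κ : Type*} [DecidableEq κ]

theorem bind_filter_fiber_eq_bind_replicate (s : Multiset ι) (t : Multiset κ) (f : ι → κ) :
    t.bind (fun k => s.filter (fun a => f a = k)) =
      s.bind (fun a => Multiset.replicate (t.count (f a)) a) := by
  have collect_hits (a : ι) :
      t.bind (fun k => if f a = k then ({a} : Multiset ι) else 0) =
        Multiset.replicate (t.count (f a)) a := by
    rw [← Multiset.bind_filter, Multiset.filter_eq, Multiset.bind_singleton,
      Multiset.map_replicate]
  -- Exchanging the two binds makes each `a` collect its own hits among the keys of `t`.
  simp only [Multiset.filter_eq_bind]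
  rw [Multiset.bind_bind]
  simp only [collect_hits]

theorem dedup_map_bind_filter_fiber (s : Multiset ι) (f : ι → κ) :
    (s.map f).dedup.bind (fun k => s.filter (fun a => f a = k)) = s := by
  have count_key {a : ι} (ha : a ∈ s) : (s.map f).dedup.count (f a) = 1 := by
    rw [Multiset.count_dedup, if_pos (Multiset.mem_map_of_mem f ha)]
  calc
    (s.map f).dedup.bind (fun k => s.filter (fun a => f a = k))
        = s.bind (fun a => Multiset.replicate ((s.map f).dedup.count (f a)) a) :=
      bind_filter_fiber_eq_bind_replicate s _ f
    _ = s.bind (fun a => {a}) :=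
      Multiset.bind_congr fun a ha => by rw [count_key ha, Multiset.replicate_one]
    _ = s := by rw [Multiset.bind_singleton, Multiset.map_id']

end Fibers

theorem map_mk_map_snd_filter_fst_eq {κ α : Type*} [DecidableEq κ] (X : Multiset (κ × α)) (k : κ) :
    ((X.filter (fun p => p.1 = k)).map Prod.snd).map (fun v => (k, v)) =
      X.filter (fun p => p.1 = k) := by
  have restore_key : ∀ p ∈ X.filter (fun p => p.1 = k), (k, p.2) = p :=
    fun p hp => Prod.ext (Multiset.of_mem_filter hp).symm rfl
  rw [Multiset.map_map]
  exact (Multiset.map_congr rfl restore_key).trans (Multiset.map_id' _)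

/-- Unnesting a group-by recovers the original bag. -/
theorem groupBy_unnest {κ α : Type*} [DecidableEq κ] (X : Multiset (κ × α)) :
    (groupBy X).bind (fun p => p.2.map (fun v => (p.1, v))) = X := by
  rw [groupBy, Multiset.bind_map]
  simp only [map_mk_map_snd_filter_fst_eq]
  exact dedup_map_bind_filter_fiber X Prod.fst
end

section
/- Let A B : Multiset (κ × Multiset α) be such that (A.map Prod.fst).Nodup and (B.map Prod.fst).Nodup. Then unnesting distributes over the full outer join with bag union: (foj (·+·) A B).bind (fun p => p.2.map (fun v => (p.1, v))) = A.bind (fun p => p.2.map (fun v => (p.1, v))) + B.bind (fun p => p.2.map (fun v => (p.1, v))). -/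
/-- Full outer join of two keyed bags: matching keys are combined with `op`,
keys occurring on only one side are kept unchanged. -/
def foj {κ α : Type*} [DecidableEq κ] (op : α → α → α)
    (X Y : Multiset (κ × α)) : Multiset (κ × α) :=
  X.bind (fun p => (Y.filter (fun q => q.1 = p.1)).map (fun q => (p.1, op p.2 q.2)))
    + X.filter (fun p => p.1 ∉ Y.map Prod.fst)
    + Y.filter (fun q => q.1 ∉ X.map Prod.fst)

/-!
If `f (k, op a b) = f (k, a) + f (k, b)`, then in the sum of `f` over the full outer join a pair of
one side contributes once for each pair of the other side with the same key, or once if there is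
none: its coefficient is `max 1 m`, where `m` is the multiplicity of its key on the other side.
Distinct keys make every coefficient `1`. Unnesting is the case where `f` takes values in the
additive monoid of bags, since `Multiset.bind` is a sum of bags.
-/

section SumFilter

variable {α β κ M : Type*} [AddCommMonoid M]

theorem sum_map_filter (s : Multiset α) (p : α → Prop) [DecidablePred p] (f : α → M) :
    ((s.filter p).map f).sum = (s.map fun a => if p a then f a else 0).sum := by
  induction s using Multiset.induction_on with
  | empty => simp
  | cons a s ih => by_cases ha : p a <;> simp [ha, ih]

theorem sum_map_sum_map_filter_comm (s : Multiset α) (t : Multiset β) (r : α → β → Prop)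
    [∀ a b, Decidable (r a b)] (f : α → β → M) :
    (s.map fun a => ((t.filter (r a)).map (f a)).sum).sum
      = (t.map fun b => ((s.filter (r · b)).map (f · b)).sum).sum := by
  simp only [sum_map_filter, Multiset.sum_map_sum_map s t]

variable [DecidableEq κ]

theorem sum_map_const_filter_eq (s : Multiset α) (u : α → κ) (k : κ) (c : M) :
    ((s.filter fun a => k = u a).map fun _ => c).sum = (s.map u).count k • c := by
  rw [Multiset.map_const', Multiset.sum_replicate, Multiset.count_map]

theorem sum_map_sum_map_filter_eq_add (s : Multiset α) (t : Multiset β) (u : α → κ) (v : β → κ)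
    (f : α → M) (g : β → M) :
    (s.map fun a => ((t.filter fun b => v b = u a).map fun b => f a + g b).sum).sum
      = (s.map fun a => (t.map v).count (u a) • f a).sum
        + (t.map fun b => (s.map u).count (v b) • g b).sum := by
  have same_key_comm (a : α) (b : β) : v b = u a ↔ u a = v b := eq_comm
  simp only [Multiset.sum_map_add]
  rw [sum_map_sum_map_filter_comm s t (fun a b => v b = u a) (fun _ b => g b)]
  simp only [sum_map_const_filter_eq]
  simp only [same_key_comm, sum_map_const_filter_eq]

theorem sum_map_count_nsmul_add_sum_map_filter_notMem (s : Multiset α) (u : α → κ)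
    (K : Multiset κ) (f : α → M) :
    (s.map fun a => K.count (u a) • f a).sum + ((s.filter fun a => u a ∉ K).map f).sum
      = (s.map fun a => max 1 (K.count (u a)) • f a).sum := by
  rw [sum_map_filter, ← Multiset.sum_map_add]
  refine congrArg Multiset.sum (Multiset.map_congr rfl fun a _ => ?_)
  by_cases ha : u a ∈ K
  · simp [ha, max_eq_right (Multiset.one_le_count_iff_mem.2 ha)]
  · simp [ha]

end SumFilter

section Foj

variable {κ α M : Type*} [DecidableEq κ] [AddCommMonoid M]
  {op : α → α → α} {f : κ × α → M}

theorem sum_map_foj (hf : ∀ k a b, f (k, op a b) = f (k, a) + f (k, b))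
    (A B : Multiset (κ × α)) :
    ((foj op A B).map f).sum
      = (A.map fun p => max 1 ((B.map Prod.fst).count p.1) • f p).sum
        + (B.map fun q => max 1 ((A.map Prod.fst).count q.1) • f q).sum := by
  have matched :
      ((A.bind fun p => (B.filter fun q => q.1 = p.1).map fun q => (p.1, op p.2 q.2)).map f).sum
        = (A.map fun p => (B.map Prod.fst).count p.1 • f p).sum
          + (B.map fun q => (A.map Prod.fst).count q.1 • f q).sum := by
    rw [← sum_map_sum_map_filter_eq_add, Multiset.map_bind, Multiset.sum_bind]
    refine congrArg Multiset.sum (Multiset.map_congr rfl fun p _ => ?_)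
    rw [Multiset.map_map]
    refine congrArg Multiset.sum (Multiset.map_congr rfl fun q hq => ?_)
    have hkey : q.1 = p.1 := (Multiset.mem_filter.1 hq).2
    calc f (p.1, op p.2 q.2) = f p + f (p.1, q.2) := hf _ _ _
      _ = f p + f q := by rw [← hkey]
  rw [foj, Multiset.map_add, Multiset.map_add, Multiset.sum_add, Multiset.sum_add, matched,
    ← sum_map_count_nsmul_add_sum_map_filter_notMem A Prod.fst,
    ← sum_map_count_nsmul_add_sum_map_filter_notMem B Prod.fst]
  abel

theorem unnest_foj_general (hf : ∀ k a b, f (k, op a b) = f (k, a) + f (k, b))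
    (A B : Multiset (κ × α)) (hA : ∀ q ∈ B, (A.map Prod.fst).count q.1 ≤ 1)
    (hB : ∀ p ∈ A, (B.map Prod.fst).count p.1 ≤ 1) :
    ((foj op A B).map f).sum = (A.map f).sum + (B.map f).sum := by
  have drop_multiplicities {s : Multiset (κ × α)} {K : Multiset κ}
      (hK : ∀ p ∈ s, K.count p.1 ≤ 1) : s.map (fun p => max 1 (K.count p.1) • f p) = s.map f :=
    Multiset.map_congr rfl fun p hp => by rw [max_eq_left (hK p hp), one_nsmul]
  rw [sum_map_foj hf, drop_multiplicities hA, drop_multiplicities hB]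

end Foj

/-- Unnesting distributes over the full outer join with bag union,
provided the keys on each side are distinct. -/
theorem unnest_foj {κ α : Type*} [DecidableEq κ]
    (A B : Multiset (κ × Multiset α))
    (hA : (A.map Prod.fst).Nodup) (hB : (B.map Prod.fst).Nodup) :
    (foj (·+·) A B).bind (fun p => p.2.map (fun v => (p.1, v)))
      = A.bind (fun p => p.2.map (fun v => (p.1, v)))
        + B.bind (fun p => p.2.map (fun v => (p.1, v))) :=
  unnest_foj_general (fun _ _ _ => Multiset.map_add _ _ _) A B
    (fun q _ => Multiset.nodup_iff_count_le_one.1 hA q.1)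
    (fun p _ => Multiset.nodup_iff_count_le_one.1 hB p.1)
end

section
/- groupBy is a homomorphism from bag union to the full outer join with bag union: for all X Y : Multiset (κ × α), groupBy (X + Y) = foj (·+·) (groupBy X) (groupBy Y). -/
/-!
A grouped bag is the graph, over the finite set of its keys, of the function sending a key to its
group. The full outer join of the graph of `f` over `s` with the graph of `g` over `t` splits into
graphs over `s ∩ t`, `s \ t` and `t \ s`, with the combined values, `f` and `g` respectively. Groups
are empty at absent keys, so for bag union all three are graphs of `f + g`, and together they make
up its graph over `s ∪ t`. It remains to note that the key set turns `X + Y` into a union and that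
the group at a fixed key is additive.
-/

section

variable {κ α β γ δ : Type*}

/-- The bag that pairs each key in the finite set `s` with the single value `f k`, i.e. the
graph of `f` over `s`. Every grouped bag has this form. -/
def tabulate (s : Finset κ) (f : κ → β) : Multiset (κ × β) :=
  s.val.map fun k => (k, f k)

theorem mem_map_fst_tabulate {s : Finset κ} {f : κ → β} {k : κ} :
    k ∈ (tabulate s f).map Prod.fst ↔ k ∈ s := by
  simp [tabulate]

theorem tabulate_congr {s : Finset κ} {f g : κ → β} (h : ∀ k ∈ s, f k = g k) :
    tabulate s f = tabulate s g :=
  Multiset.map_congr rfl fun k hk => by rw [h k hk]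

theorem filter_tabulate (s : Finset κ) (f : κ → β) (p : κ → Prop) [DecidablePred p] :
    (tabulate s f).filter (fun x => p x.1) = tabulate (s.filter p) f :=
  Multiset.filter_map ..

variable [DecidableEq κ]

theorem tabulate_union_of_disjoint {s t : Finset κ} (h : Disjoint s t) (f : κ → β) :
    tabulate (s ∪ t) f = tabulate s f + tabulate t f := by
  rw [← Finset.disjUnion_eq_union s t h, tabulate, Finset.disjUnion_val, Multiset.map_add]
  rfl

theorem tabulate_inter_add_sdiff (s t : Finset κ) (f : κ → β) :
    tabulate (s ∩ t) f + tabulate (s \ t) f = tabulate s f := by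
  rw [← tabulate_union_of_disjoint (Finset.disjoint_sdiff_inter s t).symm, Finset.union_comm,
    Finset.sdiff_union_inter]

theorem filter_fst_eq_tabulate (s : Finset κ) (f : κ → β) (k : κ) :
    (tabulate s f).filter (fun x => x.1 = k) = if k ∈ s then {(k, f k)} else 0 := by
  rw [filter_tabulate s f (· = k), Finset.filter_eq']
  split_ifs <;> rfl

theorem bind_filter_fst_eq_tabulate (op : β → γ → δ) (s t : Finset κ) (f : κ → β) (g : κ → γ) :
    (tabulate s f).bind (fun p =>
        ((tabulate t g).filter fun q => q.1 = p.1).map fun q => (p.1, op p.2 q.2)) =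
      tabulate (s ∩ t) fun k => op (f k) (g k) := by
  have matches_at (k : κ) :
      (((tabulate t g).filter fun q => q.1 = k).map fun q => (k, op (f k) q.2)) =
        if k ∈ t then {(k, op (f k) (g k))} else 0 := by
    rw [filter_fst_eq_tabulate]
    split_ifs <;> rfl
  calc (tabulate s f).bind (fun p =>
        ((tabulate t g).filter fun q => q.1 = p.1).map fun q => (p.1, op p.2 q.2))
      = s.val.bind fun k => if k ∈ t then {(k, op (f k) (g k))} else 0 := by
        rw [tabulate, Multiset.bind_map]
        exact Multiset.bind_congr fun k _ => matches_at k
    _ = (s.val.filter (· ∈ t)).map fun k => (k, op (f k) (g k)) := by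
        rw [← Multiset.bind_filter, Multiset.bind_singleton]
    _ = tabulate (s ∩ t) fun k => op (f k) (g k) := by
        rw [← Finset.filter_val, Finset.filter_mem_eq_inter, tabulate]

theorem foj_tabulate (op : β → β → β) (s t : Finset κ) (f g : κ → β) :
    foj op (tabulate s f) (tabulate t g) =
      tabulate (s ∩ t) (fun k => op (f k) (g k)) + tabulate (s \ t) f + tabulate (t \ s) g := by
  simp only [foj, bind_filter_fst_eq_tabulate, mem_map_fst_tabulate,
    filter_tabulate s f (· ∉ t), filter_tabulate t g (· ∉ s), Finset.sdiff_eq_filter]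

theorem foj_add_tabulate [AddZeroClass β] {s t : Finset κ} {f g : κ → β}
    (hf : ∀ k ∉ s, f k = 0) (hg : ∀ k ∉ t, g k = 0) :
    foj (· + ·) (tabulate s f) (tabulate t g) = tabulate (s ∪ t) (f + g) := by
  have left_only : tabulate (s \ t) f = tabulate (s \ t) (f + g) :=
    tabulate_congr fun k hk => by simp [hg k (Finset.mem_sdiff.1 hk).2]
  have right_only : tabulate (t \ s) g = tabulate (t \ s) (f + g) :=
    tabulate_congr fun k hk => by simp [hf k (Finset.mem_sdiff.1 hk).2]
  calc foj (· + ·) (tabulate s f) (tabulate t g)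
      = tabulate (s ∩ t) (f + g) + tabulate (s \ t) f + tabulate (t \ s) g := foj_tabulate ..
    _ = tabulate s (f + g) + tabulate (t \ s) (f + g) := by
        rw [left_only, right_only, tabulate_inter_add_sdiff]
    _ = tabulate (s ∪ t) (f + g) := by
        rw [← tabulate_union_of_disjoint Finset.disjoint_sdiff, Finset.union_sdiff_self_eq_union]

/-- The set of keys occurring in a keyed bag. As a `Finset` it hides the `dedup` in
`groupBy`, and sums of bags correspond to unions of key sets. -/
def keyFinset (X : Multiset (κ × α)) : Finset κ :=
  (X.map Prod.fst).toFinset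

/-- The group of the key `k` in a keyed bag: the bag of values paired with `k`. It is a total
function of `k`, with value `0` at keys that do not occur. -/
def valuesAt (X : Multiset (κ × α)) (k : κ) : Multiset α :=
  (X.filter fun p => p.1 = k).map Prod.snd

theorem groupBy_eq_tabulate (X : Multiset (κ × α)) :
    groupBy X = tabulate (keyFinset X) (valuesAt X) :=
  rfl

theorem keyFinset_add (X Y : Multiset (κ × α)) :
    keyFinset (X + Y) = keyFinset X ∪ keyFinset Y := by
  simp only [keyFinset, Multiset.map_add, Multiset.toFinset_add]

theorem valuesAt_add (X Y : Multiset (κ × α)) : valuesAt (X + Y) = valuesAt X + valuesAt Y := by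
  funext k
  simp only [valuesAt, Multiset.filter_add, Multiset.map_add, Pi.add_apply]

theorem valuesAt_eq_zero_of_notMem_keyFinset {X : Multiset (κ × α)} {k : κ}
    (hk : k ∉ keyFinset X) : valuesAt X k = 0 := by
  rw [valuesAt, Multiset.map_eq_zero, Multiset.filter_eq_nil]
  rintro p hp rfl
  exact hk (Multiset.mem_toFinset.2 (Multiset.mem_map_of_mem Prod.fst hp))

end

/-- `groupBy` is a homomorphism from bag union to the full outer join with bag union. -/
theorem groupBy_hom {κ α : Type*} [DecidableEq κ] (X Y : Multiset (κ × α)) :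
    groupBy (X + Y) = foj (·+·) (groupBy X) (groupBy Y) := by
  simp only [groupBy_eq_tabulate, keyFinset_add, valuesAt_add]
  exact (foj_add_tabulate (fun _ => valuesAt_eq_zero_of_notMem_keyFinset)
    fun _ => valuesAt_eq_zero_of_notMem_keyFinset).symm
end

section
/- A cMap over a keyed merge is a homomorphism into the full outer join of the outputs: let opM : M → M → M, opN : N → N → N, and f : κ → M → Multiset (θ × N) satisfy (i) f k (opM a b) = foj opN (f k a) (f k b) for all k, a, b, and (ii) for all k ≠ k' and all a b, no θ-key occurs both in (f k a).map Prod.fst and in (f k' b).map Prod.fst. Then for all X Y : Multiset (κ × M) with (X.map Prod.fst).Nodup and (Y.map Prod.fst).Nodup, (foj opM X Y).bind (fun p => f p.1 p.2) = foj opN (X.bind (fun p => f p.1 p.2)) (Y.bind (fun p => f p.1 p.2)). -/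
/-!
The full outer join is local in the key: over two families of bags in which different indices never
share a key across the two sides, it can be computed index by index. Splitting `X` and `Y` into
their fibres over the keys of `κ` is such a decomposition, and condition (ii) says that applying `f`
to the fibres gives another one. The claim thus reduces to a single key, where either one of the
fibres is empty or both are singletons, and the latter case is condition (i).
-/

section Joins

variable {κ α : Type*} [DecidableEq κ]

/-- The inner join of two keyed bags: one combined pair for each two pairs with the same key. -/
def innerJoin (op : α → α → α) (X Y : Multiset (κ × α)) : Multiset (κ × α) :=
  X.bind fun p => (Y.filter fun q => q.1 = p.1).map fun q => (p.1, op p.2 q.2)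

/-- The antijoin of two keyed bags: the part of the first whose keys do not occur in the second. -/
def antiJoin (X Y : Multiset (κ × α)) : Multiset (κ × α) :=
  X.filter fun p => p.1 ∉ Y.map Prod.fst

theorem foj_eq_innerJoin_add_antiJoin (op : α → α → α) (X Y : Multiset (κ × α)) :
    foj op X Y = innerJoin op X Y + antiJoin X Y + antiJoin Y X :=
  rfl

theorem innerJoin_add_left (op : α → α → α) (X X' Y : Multiset (κ × α)) :
    innerJoin op (X + X') Y = innerJoin op X Y + innerJoin op X' Y :=
  Multiset.add_bind _ _ _

theorem innerJoin_add_right (op : α → α → α) (X Y Y' : Multiset (κ × α)) :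
    innerJoin op X (Y + Y') = innerJoin op X Y + innerJoin op X Y' := by
  simp only [innerJoin, Multiset.filter_add, Multiset.map_add, Multiset.bind_add]

theorem innerJoin_eq_zero_of_disjoint (op : α → α → α) {X Y : Multiset (κ × α)}
    (h : Disjoint (X.map Prod.fst) (Y.map Prod.fst)) : innerJoin op X Y = 0 := by
  rw [Multiset.disjoint_map_map] at h
  refine (Multiset.bind_congr fun p hp => ?_).trans (Multiset.bind_zero X)
  rw [Multiset.filter_eq_nil.2 fun q hq => (h p hp q hq).symm, Multiset.map_zero]

theorem antiJoin_add_left (X X' Y : Multiset (κ × α)) :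
    antiJoin (X + X') Y = antiJoin X Y + antiJoin X' Y :=
  Multiset.filter_add _ _ _

theorem antiJoin_add_right_of_disjoint {X Y' : Multiset (κ × α)} (Y : Multiset (κ × α))
    (h : Disjoint (X.map Prod.fst) (Y'.map Prod.fst)) :
    antiJoin X (Y + Y') = antiJoin X Y := by
  refine Multiset.filter_congr fun p hp => not_congr ?_
  have hpY' : p.1 ∉ Y'.map Prod.fst :=
    Multiset.disjoint_left.1 h (Multiset.mem_map_of_mem Prod.fst hp)
  rw [Multiset.map_add, Multiset.mem_add, or_iff_left hpY']

theorem foj_zero_left (op : α → α → α) (Y : Multiset (κ × α)) : foj op 0 Y = Y := by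
  simp [foj]

theorem foj_zero_right (op : α → α → α) (X : Multiset (κ × α)) : foj op X 0 = X := by
  simp [foj]

theorem foj_singleton_singleton (op : α → α → α) (k : κ) (a b : α) :
    foj op {(k, a)} {(k, b)} = {(k, op a b)} := by
  simp [foj, Multiset.filter_singleton]

theorem foj_add_add_of_disjoint (op : α → α → α) {X X' Y Y' : Multiset (κ × α)}
    (h : Disjoint (X.map Prod.fst) (Y'.map Prod.fst))
    (h' : Disjoint (X'.map Prod.fst) (Y.map Prod.fst)) :
    foj op (X + X') (Y + Y') = foj op X Y + foj op X' Y' := by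
  have hinner : innerJoin op (X + X') (Y + Y') = innerJoin op X Y + innerJoin op X' Y' := by
    rw [innerJoin_add_left, innerJoin_add_right, innerJoin_add_right,
      innerJoin_eq_zero_of_disjoint op h, innerJoin_eq_zero_of_disjoint op h', add_zero, zero_add]
  have hleft : antiJoin (X + X') (Y + Y') = antiJoin X Y + antiJoin X' Y' := by
    rw [antiJoin_add_left, antiJoin_add_right_of_disjoint Y h, add_comm Y,
      antiJoin_add_right_of_disjoint Y' h']
  have hright : antiJoin (Y + Y') (X + X') = antiJoin Y X + antiJoin Y' X' := by
    rw [antiJoin_add_left, antiJoin_add_right_of_disjoint X h'.symm, add_comm X,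
      antiJoin_add_right_of_disjoint X' h.symm]
  simp only [foj_eq_innerJoin_add_antiJoin, hinner, hleft, hright]
  abel

theorem foj_sum_sum_of_disjoint {ι : Type*} (op : α → α → α) (s : Finset ι)
    {X Y : ι → Multiset (κ × α)}
    (h : ∀ i ∈ s, ∀ j ∈ s, i ≠ j → Disjoint ((X i).map Prod.fst) ((Y j).map Prod.fst)) :
    foj op (∑ i ∈ s, X i) (∑ i ∈ s, Y i) = ∑ i ∈ s, foj op (X i) (Y i) := by
  classical
  induction s using Finset.induction_on with
  | empty => exact foj_zero_left op 0
  | insert i s hi ih =>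
    have hne : ∀ j ∈ s, i ≠ j := fun j hj hij => hi (hij ▸ hj)
    have hX : Disjoint ((X i).map Prod.fst) ((∑ j ∈ s, Y j).map Prod.fst) := by
      rw [← Multiset.coe_mapAddMonoidHom, map_sum, Multiset.disjoint_finsetSum_right]
      exact fun j hj => h i (s.mem_insert_self i) j (Finset.mem_insert_of_mem hj) (hne j hj)
    have hY : Disjoint ((∑ j ∈ s, X j).map Prod.fst) ((Y i).map Prod.fst) := by
      rw [← Multiset.coe_mapAddMonoidHom, map_sum, Multiset.disjoint_finsetSum_left]
      exact fun j hj => h j (Finset.mem_insert_of_mem hj) i (s.mem_insert_self i) (hne j hj).symm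
    rw [Finset.sum_insert hi, Finset.sum_insert hi, Finset.sum_insert hi,
      foj_add_add_of_disjoint op hX hY,
      ih fun j hj l hl => h j (Finset.mem_insert_of_mem hj) l (Finset.mem_insert_of_mem hl)]

end Joins

section KeyFiber

variable {κ α : Type*} [DecidableEq κ]

/-- The fibre of a keyed bag over `k`: its pairs with key `k`, with their multiplicities. -/
def keyFiber (X : Multiset (κ × α)) (k : κ) : Multiset (κ × α) :=
  X.filter fun p => k = p.1

theorem fst_eq_of_mem_keyFiber {X : Multiset (κ × α)} {k : κ} {p : κ × α}
    (hp : p ∈ keyFiber X k) : p.1 = k :=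
  (Multiset.of_mem_filter hp).symm

theorem sum_keyFiber {X : Multiset (κ × α)} {s : Finset κ} (hs : ∀ k ∈ X.map Prod.fst, k ∈ s) :
    ∑ k ∈ s, keyFiber X k = X := by
  classical
  ext p
  have hp : p.1 ∉ s → X.count p = 0 := fun hps =>
    Multiset.count_eq_zero_of_notMem fun hpX => hps (hs _ (Multiset.mem_map_of_mem Prod.fst hpX))
  simpa [Multiset.count_sum', keyFiber, Multiset.count_filter] using fun h => (hp h).symm

theorem keyFiber_eq_zero {X : Multiset (κ × α)} {k : κ} (hk : k ∉ X.map Prod.fst) :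
    keyFiber X k = 0 :=
  Multiset.filter_eq_nil.2 fun _ hp hkp => hk (hkp ▸ Multiset.mem_map_of_mem Prod.fst hp)

theorem exists_keyFiber_eq_singleton {X : Multiset (κ × α)} {k : κ}
    (hk : (X.map Prod.fst).count k = 1) : ∃ a, keyFiber X k = {(k, a)} := by
  rw [Multiset.count_map, Multiset.card_eq_one] at hk
  obtain ⟨⟨k', a⟩, hX : keyFiber X k = {(k', a)}⟩ := hk
  obtain rfl : k' = k := fst_eq_of_mem_keyFiber (hX ▸ Multiset.mem_singleton_self (k', a))
  exact ⟨a, hX⟩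

theorem disjoint_map_fst_keyFiber (X Y : Multiset (κ × α)) {k k' : κ} (h : k ≠ k') :
    Disjoint ((keyFiber X k).map Prod.fst) ((keyFiber Y k').map Prod.fst) := by
  rw [Multiset.disjoint_map_map]
  intro p hp q hq
  rwa [fst_eq_of_mem_keyFiber hp, fst_eq_of_mem_keyFiber hq]

end KeyFiber

section CMap

variable {κ θ M N : Type*}

/-- The cMap of `f`, which replaces each pair `(k, a)` of a keyed bag by the keyed bag `f k a`,
bundled as an additive homomorphism so that it commutes with finite sums of bags. -/
def cMap (f : κ → M → Multiset (θ × N)) : Multiset (κ × M) →+ Multiset (θ × N) where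
  toFun X := X.bind fun p => f p.1 p.2
  map_zero' := Multiset.zero_bind _
  map_add' X Y := Multiset.add_bind X Y _

theorem mem_cMap {f : κ → M → Multiset (θ × N)} {X : Multiset (κ × M)} {r : θ × N} :
    r ∈ cMap f X ↔ ∃ p ∈ X, r ∈ f p.1 p.2 :=
  Multiset.mem_bind

theorem cMap_singleton (f : κ → M → Multiset (θ × N)) (k : κ) (a : M) :
    cMap f {(k, a)} = f k a :=
  Multiset.singleton_bind _ _

theorem disjoint_map_fst_cMap_keyFiber [DecidableEq κ] {f : κ → M → Multiset (θ × N)} {k k' : κ}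
    (h : ∀ a b, Disjoint ((f k a).map Prod.fst) ((f k' b).map Prod.fst))
    (X Y : Multiset (κ × M)) :
    Disjoint ((cMap f (keyFiber X k)).map Prod.fst) ((cMap f (keyFiber Y k')).map Prod.fst) := by
  rw [Multiset.disjoint_map_map]
  intro r hr t ht
  obtain ⟨p, hp, hrp⟩ := mem_cMap.1 hr
  obtain ⟨q, hq, htq⟩ := mem_cMap.1 ht
  rw [fst_eq_of_mem_keyFiber hp] at hrp
  rw [fst_eq_of_mem_keyFiber hq] at htq
  exact Multiset.disjoint_map_map.1 (h p.2 q.2) r hrp t htq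

variable [DecidableEq κ] [DecidableEq θ] {opM : M → M → M} {opN : N → N → N}
  {f : κ → M → Multiset (θ × N)} {X Y : Multiset (κ × M)}

theorem cMap_foj_keyFiber {k : κ} (hf : ∀ a b, f k (opM a b) = foj opN (f k a) (f k b))
    (hk : k ∈ X.map Prod.fst → k ∈ Y.map Prod.fst →
      (X.map Prod.fst).count k = 1 ∧ (Y.map Prod.fst).count k = 1) :
    cMap f (foj opM (keyFiber X k) (keyFiber Y k))
      = foj opN (cMap f (keyFiber X k)) (cMap f (keyFiber Y k)) := by
  by_cases hX : k ∈ X.map Prod.fst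
  · by_cases hY : k ∈ Y.map Prod.fst
    · obtain ⟨a, ha⟩ := exists_keyFiber_eq_singleton (hk hX hY).1
      obtain ⟨b, hb⟩ := exists_keyFiber_eq_singleton (hk hX hY).2
      simp only [ha, hb, foj_singleton_singleton, cMap_singleton, hf]
    · simp only [keyFiber_eq_zero hY, map_zero, foj_zero_right]
  · simp only [keyFiber_eq_zero hX, map_zero, foj_zero_left]

theorem cMap_foj_hom_general
    (hf : ∀ k a b, f k (opM a b) = foj opN (f k a) (f k b))
    (hdisj : ∀ k k', k ≠ k' → ∀ a b, Disjoint ((f k a).map Prod.fst) ((f k' b).map Prod.fst))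
    (hXY : ∀ k ∈ X.map Prod.fst, k ∈ Y.map Prod.fst →
      (X.map Prod.fst).count k = 1 ∧ (Y.map Prod.fst).count k = 1) :
    cMap f (foj opM X Y) = foj opN (cMap f X) (cMap f Y) := by
  let s : Finset κ := (X.map Prod.fst + Y.map Prod.fst).toFinset
  have hX : ∑ k ∈ s, keyFiber X k = X :=
    sum_keyFiber fun k hk => Multiset.mem_toFinset.2 (Multiset.mem_add.2 (.inl hk))
  have hY : ∑ k ∈ s, keyFiber Y k = Y :=
    sum_keyFiber fun k hk => Multiset.mem_toFinset.2 (Multiset.mem_add.2 (.inr hk))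
  calc cMap f (foj opM X Y)
      = cMap f (foj opM (∑ k ∈ s, keyFiber X k) (∑ k ∈ s, keyFiber Y k)) := by rw [hX, hY]
    _ = ∑ k ∈ s, cMap f (foj opM (keyFiber X k) (keyFiber Y k)) := by
      rw [foj_sum_sum_of_disjoint opM s fun k _ k' _ => disjoint_map_fst_keyFiber X Y, map_sum]
    _ = ∑ k ∈ s, foj opN (cMap f (keyFiber X k)) (cMap f (keyFiber Y k)) :=
      Finset.sum_congr rfl fun k _ => cMap_foj_keyFiber (hf k) (hXY k)
    _ = foj opN (∑ k ∈ s, cMap f (keyFiber X k)) (∑ k ∈ s, cMap f (keyFiber Y k)) :=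
      (foj_sum_sum_of_disjoint opN s fun k _ k' _ hkk' =>
        disjoint_map_fst_cMap_keyFiber (hdisj k k' hkk') X Y).symm
    _ = foj opN (cMap f X) (cMap f Y) := by rw [← map_sum, ← map_sum, hX, hY]

end CMap

/-- A cMap over a keyed merge is a homomorphism into the full outer join of the
outputs, provided the per-key function is a homomorphism into the full outer
join and distinct keys never produce overlapping θ-keys. -/
theorem cMap_foj_hom {κ θ M N : Type*} [DecidableEq κ] [DecidableEq θ]
    (opM : M → M → M) (opN : N → N → N) (f : κ → M → Multiset (θ × N))
    (hf : ∀ (k : κ) (a b : M), f k (opM a b) = foj opN (f k a) (f k b))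
    (hdisj : ∀ (k k' : κ), k ≠ k' → ∀ (a b : M) (t : θ),
        t ∈ (f k a).map Prod.fst → t ∉ (f k' b).map Prod.fst) :
    ∀ X Y : Multiset (κ × M),
      (X.map Prod.fst).Nodup → (Y.map Prod.fst).Nodup →
      (foj opM X Y).bind (fun p => f p.1 p.2)
        = foj opN (X.bind (fun p => f p.1 p.2)) (Y.bind (fun p => f p.1 p.2)) := by
  exact fun X Y hX hY => cMap_foj_hom_general hf
    (fun k k' hkk' a b => Multiset.disjoint_left.2 (hdisj k k' hkk' a b _))
    fun k hkX hkY => ⟨Multiset.count_eq_one_of_mem hX hkX, Multiset.count_eq_one_of_mem hY hkY⟩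
end

section
/- Removing lineage commutes with grouping: for every X : Multiset (κ × (θ × α)), regrouping the unnested lineage-keyed groups by the outer key alone equals grouping the lineage-stripped input, i.e. groupBy ((groupBy (X.map (fun p => ((p.1, p.2.1), p.2.2)))).bind (fun q => q.2.map (fun a => (q.1.1, a)))) = groupBy (X.map (fun p => (p.1, p.2.2))). -/
theorem dedup_map_bind_filter_eq_self {α κ : Type*} [DecidableEq κ] (f : α → κ)
    (X : Multiset α) :
    (X.map f).dedup.bind (fun k => X.filter (fun x => f x = k)) = X := by
  classical
  ext a
  calc ((X.map f).dedup.bind fun k => X.filter fun x => f x = k).count a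
      = ∑ k ∈ (X.map f).toFinset, if f a = k then X.count a else 0 := by
        simp only [Multiset.count_bind, Multiset.count_filter, Finset.sum, Multiset.toFinset_val]
    _ = if f a ∈ (X.map f).toFinset then X.count a else 0 := Finset.sum_ite_eq ..
    _ = X.count a := by
        refine ite_eq_left_iff.mpr fun hfa => ?_
        have ha : a ∉ X := fun ha =>
          hfa (Multiset.mem_toFinset.mpr (Multiset.mem_map_of_mem f ha))
        exact (Multiset.count_eq_zero_of_notMem ha).symm

theorem groupBy_bind_map {κ α β : Type*} [DecidableEq κ] (X : Multiset (κ × α))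
    (f : κ × α → β) :
    (groupBy X).bind (fun q => q.2.map (fun a => f (q.1, a))) = X.map f := by
  have map_fiber (k : κ) :
      ((X.filter fun p => p.1 = k).map Prod.snd).map (fun a => f (k, a))
        = (X.filter fun p => p.1 = k).map f := by
    rw [Multiset.map_map]
    refine Multiset.map_congr rfl fun p hp => ?_
    obtain rfl := Multiset.of_mem_filter hp
    rfl
  calc (groupBy X).bind (fun q => q.2.map fun a => f (q.1, a))
      = (X.map Prod.fst).dedup.bind (fun k => (X.filter fun p => p.1 = k).map f) := by
        simp only [groupBy, Multiset.bind_map, map_fiber]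
    _ = X.map f := by
        rw [← Multiset.map_bind, dedup_map_bind_filter_eq_self]

/-- Removing lineage commutes with grouping: regrouping the unnested
lineage-keyed groups by the outer key alone equals grouping the
lineage-stripped input. -/
theorem groupBy_remove_lineage {κ θ α : Type*} [DecidableEq κ] [DecidableEq θ]
    (X : Multiset (κ × (θ × α))) :
    groupBy ((groupBy (X.map (fun p => ((p.1, p.2.1), p.2.2)))).bind
        (fun q => q.2.map (fun a => (q.1.1, a))))
      = groupBy (X.map (fun p => (p.1, p.2.2))) := by
  rw [groupBy_bind_map _ (fun p : (κ × θ) × α => (p.1.1, p.2)), Multiset.map_map,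
    Function.comp_def]
end

section
/- Applying a per-key additive map to lineage-refined groups gives the same result as applying it to the groups regrouped by the key alone: let f : κ → Multiset α → Multiset β satisfy f k 0 = 0 and f k (s + t) = f k s + f k t for all k, s, t. Then for every X : Multiset ((κ × θ) × Multiset α), X.bind (fun q => f q.1.1 q.2) = (groupBy (X.bind (fun q => q.2.map (fun a => (q.1.1, a))))).bind (fun p => f p.1 p.2). -/
/-!
A family of additive maps on bags is determined by its values on singletons, so its total over a
bag of groups depends only on the underlying bag of key-value pairs. Forgetting the lineage and
regrouping by key leaves that bag unchanged.
-/

/-- The bag of key-value pairs underlying a bag of groups, each value paired with the key of its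
group. Keys may repeat among the groups, and empty groups leave no trace. -/
def ungroup {κ α : Type*} (Z : Multiset (κ × Multiset α)) : Multiset (κ × α) :=
  Z.bind fun q => q.2.map (Prod.mk q.1)

theorem sum_filter_eq_of_maps_to {κ γ : Type*} [DecidableEq κ] {key : γ → κ} {Y : Multiset γ}
    {S : Finset κ} (h : ∀ y ∈ Y, key y ∈ S) :
    ∑ k ∈ S, Y.filter (fun y => key y = k) = Y := by
  classical
  ext y
  have count_fiber : ∀ k, (Y.filter (fun y => key y = k)).count y
      = if key y = k then Y.count y else 0 := fun _ => Multiset.count_filter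
  rw [Multiset.count_sum', Finset.sum_congr rfl fun k _ => count_fiber k, Finset.sum_ite_eq]
  split_ifs with hy
  · rfl
  · exact (Multiset.count_eq_zero_of_notMem (mt (h y) hy)).symm

theorem ungroup_groupBy {κ α : Type*} [DecidableEq κ] (X : Multiset (κ × α)) :
    ungroup (groupBy X) = X := by
  have retag : ∀ k, ((X.filter (fun p => p.1 = k)).map Prod.snd).map (Prod.mk k)
      = X.filter (fun p => p.1 = k) := by
    intro k
    rw [Multiset.map_map]
    refine (Multiset.map_congr rfl fun p hp => ?_).trans (Multiset.map_id _)
    exact Prod.ext (Multiset.mem_filter.1 hp).2.symm rfl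
  calc ungroup (groupBy X)
      = ∑ k ∈ (X.map Prod.fst).toFinset,
          ((X.filter (fun p => p.1 = k)).map Prod.snd).map (Prod.mk k) :=
        Multiset.bind_map _ _ _
    _ = ∑ k ∈ (X.map Prod.fst).toFinset, X.filter (fun p => p.1 = k) :=
        Finset.sum_congr rfl fun k _ => retag k
    _ = X := sum_filter_eq_of_maps_to fun _ hp =>
        Multiset.mem_toFinset.2 (Multiset.mem_map_of_mem _ hp)

theorem sum_map_singleton_apply {α M : Type*} [AddCommMonoid M] (f : Multiset α →+ M)
    (s : Multiset α) : (s.map fun a => f {a}).sum = f s :=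
  calc (s.map fun a => f {a}).sum
      = ((s.map fun a => ({a} : Multiset α)).map f).sum := by rw [Multiset.map_map]; rfl
    _ = f (s.map fun a => ({a} : Multiset α)).sum := (map_multiset_sum f _).symm
    _ = f s := by rw [Multiset.sum_map_singleton]

theorem sum_map_ungroup {κ α M : Type*} [AddCommMonoid M] (f : κ → Multiset α →+ M)
    (Z : Multiset (κ × Multiset α)) :
    ((ungroup Z).map fun p => f p.1 {p.2}).sum = (Z.map fun q => f q.1 q.2).sum := by
  rw [ungroup, Multiset.map_bind, Multiset.sum_bind]
  refine congrArg Multiset.sum (Multiset.map_congr rfl fun q _ => ?_)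
  rw [Multiset.map_map]
  exact sum_map_singleton_apply (f q.1) q.2

theorem bind_lineage_groups_eq_general {ι κ α M : Type*} [DecidableEq κ] [AddCommMonoid M]
    (key : ι → κ) (f : κ → Multiset α →+ M) (X : Multiset (ι × Multiset α)) :
    (X.map fun q => f (key q.1) q.2).sum
      = ((groupBy (X.bind fun q => q.2.map fun a => (key q.1, a))).map
          fun p => f p.1 p.2).sum := by
  have relabel : ungroup (X.map (Prod.map key id))
      = X.bind fun q => q.2.map fun a => (key q.1, a) := Multiset.bind_map _ _ _
  rw [← relabel, ← sum_map_ungroup f (groupBy _), ungroup_groupBy, sum_map_ungroup,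
    Multiset.map_map]
  rfl

/-- Applying a per-key additive map to lineage-refined groups gives the same
result as applying it to the groups regrouped by the key alone. -/
theorem bind_lineage_groups_eq {κ θ α β : Type*} [DecidableEq κ]
    (f : κ → Multiset α → Multiset β)
    (hzero : ∀ k : κ, f k 0 = 0)
    (hadd : ∀ (k : κ) (s t : Multiset α), f k (s + t) = f k s + f k t)
    (X : Multiset ((κ × θ) × Multiset α)) :
    X.bind (fun q => f q.1.1 q.2)
      = (groupBy (X.bind (fun q => q.2.map (fun a => (q.1.1, a))))).bind
          (fun p => f p.1 p.2) :=
  bind_lineage_groups_eq_general Prod.fst (fun k => ⟨⟨f k, hzero k⟩, hadd k⟩) X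
end
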